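/- For the random field Ising model on V_n with Gaussian disorder and β, h > 0, the overlap R_{1,2} = |V_n|^{-1} Σ_{x∈V_n} σ_x¹ σ_x² of two independent replicas satisfies E(⟨R_{1,2}²⟩ − ⟨R_{1,2}⟩²) ≤ 2√(2+h²)/(h√|V_n|). -/

import Mathlib

open Finset MeasureTheory ProbabilityTheory Real Filter

noncomputable section

/-- The box `V_n = ℤ^d ∩ [1,n]^d`. -/
def box (d n : ℕ) : Finset (Fin d → ℤ) := Fintype.piFinset fun _ => Finset.Icc 1 (n : ℤ)

/-- Spin configurations on `V_n`, a spin is encoded by a `Bool`. -/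
abbrev Config (d n : ℕ) := {x // x ∈ box d n} → Bool

/-- The spin value `±1` of a `Bool`. -/
def spin (b : Bool) : ℝ := if b then 1 else -1

/-- The (negative) Hamiltonian `β ∑_{⟨xy⟩} σ_x σ_y + h ∑_x g_x σ_x`, where
`⟨xy⟩` ranges over nearest-neighbor pairs in the box (each ordered pair counted
with weight 1/2, i.e. each unordered pair once). -/
def energy (d n : ℕ) (β h : ℝ) (g : {x // x ∈ box d n} → ℝ) (σ : Config d n) : ℝ :=
  β * ((1 : ℝ) / 2 * ∑ x : {x // x ∈ box d n}, ∑ y : {x // x ∈ box d n},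
      if (∑ i, |x.1 i - y.1 i|) = 1 then spin (σ x) * spin (σ y) else 0)
  + h * ∑ x, g x * spin (σ x)

/-- The partition function `Z_n(β,h)`. -/
def Z (d n : ℕ) (β h : ℝ) (g : {x // x ∈ box d n} → ℝ) : ℝ :=
  ∑ σ : Config d n, Real.exp (energy d n β h g σ)

/-- Gibbs expectation `⟨f⟩`. -/
def gibbs (d n : ℕ) (β h : ℝ) (g : {x // x ∈ box d n} → ℝ) (f : Config d n → ℝ) : ℝ :=
  (∑ σ : Config d n, f σ * Real.exp (energy d n β h g σ)) / Z d n β h g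

/-- Two-replica Gibbs expectation. -/
def gibbs2 (d n : ℕ) (β h : ℝ) (g : {x // x ∈ box d n} → ℝ)
    (f : Config d n → Config d n → ℝ) : ℝ :=
  (∑ σ1 : Config d n, ∑ σ2 : Config d n,
    f σ1 σ2 * (Real.exp (energy d n β h g σ1) * Real.exp (energy d n β h g σ2)))
    / (Z d n β h g) ^ 2

/-- The overlap `R_{1,2}` of two configurations. -/
def overlap (d n : ℕ) (σ1 σ2 : Config d n) : ℝ :=
  ((box d n).card : ℝ)⁻¹ * ∑ x, spin (σ1 x) * spin (σ2 x)

/-- The disorder: i.i.d. standard Gaussians indexed by the box. -/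
def μdis (d n : ℕ) : Measure ({x // x ∈ box d n} → ℝ) :=
  Measure.pi fun _ => gaussianReal 0 1

/-- Partial derivative in the coordinate `x`. -/
def pd {ι : Type*} [DecidableEq ι] (x : ι) (F : (ι → ℝ) → ℝ) : (ι → ℝ) → ℝ :=
  fun g => deriv (fun t => F (Function.update g x t)) (g x)

end

/-!
Gaussian integration by parts, one site at a time, turns `h · E Var⟨M⟩` for the magnetization
`M = ∑ x, σ x` into `E[(∑ x, g x) ⟨M⟩]`, and `|⟨M⟩| ≤ N` bounds this by `N √N`. By the FKG
inequality all covariances of spins are nonnegative, so that factoring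
`⟨σ_x σ_y⟩² − ⟨σ_x⟩² ⟨σ_y⟩²` as a difference of squares bounds the variance of `N R₁₂` by twice the
variance of `M`. Dividing by `N²` gives the bound `2 / (h √N)`.
-/

namespace RandomFieldIsing

section GaussianIntegrationByParts

lemma hasDerivAt_gaussianPDFReal (m : ℝ) (v : NNReal) (x : ℝ) :
    HasDerivAt (gaussianPDFReal m v) (-((x - m) / v) * gaussianPDFReal m v x) x := by
  have hexponent : HasDerivAt (fun t : ℝ => -(t - m) ^ 2 / (2 * v)) (-((x - m) / v)) x :=
    ((((hasDerivAt_id' x).sub_const m).fun_pow 2).fun_neg.div_const (2 * (v : ℝ))).congr_deriv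
      (by push_cast; ring)
  convert! hexponent.exp.const_mul (√(2 * π * v))⁻¹ using 1
  rw [gaussianPDFReal]
  ring

lemma integrable_gaussianReal_iff {m : ℝ} {v : NNReal} (hv : v ≠ 0) {f : ℝ → ℝ} :
    Integrable f (gaussianReal m v) ↔ Integrable fun x => gaussianPDFReal m v x * f x := by
  rw [gaussianReal_of_var_ne_zero m hv, integrable_withDensity_iff_integrable_smul'
    (measurable_gaussianPDF m v) (ae_of_all _ fun _ => gaussianPDF_lt_top)]
  simp only [toReal_gaussianPDF, smul_eq_mul]

lemma integral_sub_mean_mul_gaussianReal {m : ℝ} {v : NNReal} {f f' : ℝ → ℝ}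
    (hderiv : ∀ x, HasDerivAt f (f' x) x) (hf : Integrable f (gaussianReal m v))
    (hf' : Integrable f' (gaussianReal m v))
    (hxf : Integrable (fun x => (x - m) * f x) (gaussianReal m v)) :
    ∫ x, (x - m) * f x ∂gaussianReal m v = v * ∫ x, f' x ∂gaussianReal m v := by
  rcases eq_or_ne v 0 with rfl | hv
  · simp
  rw [integrable_gaussianReal_iff hv] at hf hf' hxf
  have hparts := integral_mul_deriv_eq_deriv_mul_of_integrable
    (fun x _ => hderiv x) (fun x _ => hasDerivAt_gaussianPDFReal m v x)
    ((hxf.div_const v).neg.congr (ae_of_all _ fun x => by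
      simp only [Pi.neg_apply, Pi.mul_apply]; ring))
    (hf'.congr (ae_of_all _ fun x => mul_comm _ _))
    (hf.congr (ae_of_all _ fun x => mul_comm _ _))
  have hv' : (v : ℝ) ≠ 0 := by exact_mod_cast hv
  rw [integral_gaussianReal_eq_integral_smul hv, integral_gaussianReal_eq_integral_smul hv]
  calc ∫ x, gaussianPDFReal m v x • ((x - m) * f x)
      = ∫ x, -v * (f x * (-((x - m) / v) * gaussianPDFReal m v x)) := by
        congr with x
        simp only [smul_eq_mul]
        field_simp
    _ = v * ∫ x, gaussianPDFReal m v x • f' x := by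
        simp only [integral_const_mul, hparts, neg_mul_neg, smul_eq_mul, mul_comm]

variable {ι : Type*} [Fintype ι] [DecidableEq ι]

lemma measurePreserving_update_pi {X : ι → Type*} [∀ i, MeasurableSpace (X i)]
    (μ : ∀ i, Measure (X i)) [∀ i, IsProbabilityMeasure (μ i)] (y : ι) :
    MeasurePreserving (fun p : (∀ i, X i) × X y => Function.update p.1 y p.2)
      ((Measure.pi μ).prod (μ y)) (Measure.pi μ) := by
  have hmeas : Measurable fun p : (∀ i, X i) × X y => Function.update p.1 y p.2 := by
    refine measurable_pi_lambda _ fun i => ?_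
    rcases eq_or_ne i y with rfl | hi
    · simpa using measurable_snd
    · simp only [Function.update_of_ne hi]
      fun_prop
  refine ⟨hmeas, (Measure.pi_eq fun s hs => ?_).symm⟩
  have hpreimage : (fun p : (∀ i, X i) × X y => Function.update p.1 y p.2) ⁻¹' Set.univ.pi s
      = Set.univ.pi (Function.update s y Set.univ) ×ˢ s y := by
    ext p
    simp only [Set.mem_preimage, Set.mem_prod, Set.mem_univ_pi]
    grind
  rw [Measure.map_apply hmeas (.univ_pi hs), hpreimage, Measure.prod_prod, Measure.pi_pi,
    ← Finset.prod_erase_mul _ _ (Finset.mem_univ y),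
    ← Finset.prod_erase_mul _ (fun i => μ i (s i)) (Finset.mem_univ y),
    Function.update_self, measure_univ, mul_one]
  congr 1
  exact Finset.prod_congr rfl fun i hi => by rw [Function.update_of_ne (Finset.ne_of_mem_erase hi)]

lemma integral_coord_sub_mean_mul_pi_gaussianReal {m : ι → ℝ} {v : ι → NNReal}
    {F F' : (ι → ℝ) → ℝ} (y : ι)
    (hderiv : ∀ g, HasDerivAt (fun t => F (Function.update g y t)) (F' g) (g y))
    (hF : Integrable F (.pi fun i => gaussianReal (m i) (v i)))
    (hF' : Integrable F' (.pi fun i => gaussianReal (m i) (v i)))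
    (hyF : Integrable (fun g => (g y - m y) * F g) (.pi fun i => gaussianReal (m i) (v i))) :
    ∫ g, (g y - m y) * F g ∂.pi (fun i => gaussianReal (m i) (v i))
      = v y * ∫ g, F' g ∂.pi (fun i => gaussianReal (m i) (v i)) := by
  set γ := Measure.pi fun i => gaussianReal (m i) (v i)
  have hupdate : MeasurePreserving (fun p : (ι → ℝ) × ℝ => Function.update p.1 y p.2)
      (γ.prod (gaussianReal (m y) (v y))) γ := measurePreserving_update_pi _ y
  have fubini {G : (ι → ℝ) → ℝ} (hG : Integrable G γ) :
      ∫ g, G g ∂γ = ∫ g, ∫ t, G (Function.update g y t) ∂gaussianReal (m y) (v y) ∂γ := by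
    refine .trans ?_ (integral_prod _ (hupdate.integrable_comp_of_integrable hG))
    conv_lhs => rw [← hupdate.map_eq]
    exact integral_map hupdate.aemeasurable (hupdate.map_eq.symm ▸ hG.aestronglyMeasurable)
  have section_integrable {G : (ι → ℝ) → ℝ} (hG : Integrable G γ) :
      ∀ᵐ g ∂γ, Integrable (fun t => G (Function.update g y t)) (gaussianReal (m y) (v y)) :=
    (hupdate.integrable_comp_of_integrable hG).prod_right_ae
  rw [fubini hyF, fubini hF', ← integral_const_mul]
  refine integral_congr_ae ?_
  filter_upwards [section_integrable hF, section_integrable hF', section_integrable hyF]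
    with g hFg hF'g hyFg
  simp only [Function.update_self] at hyFg ⊢
  refine integral_sub_mean_mul_gaussianReal (fun t => ?_) hFg hF'g hyFg
  simpa using hderiv (Function.update g y t)

end GaussianIntegrationByParts

section Moments

lemma memLp_mul_prod {Ω Ω' : Type*} [MeasurableSpace Ω] [MeasurableSpace Ω'] {μ : Measure Ω}
    {ν : Measure Ω'} [SFinite μ] [SFinite ν] {X : Ω → ℝ} {Y : Ω' → ℝ}
    (hX : MemLp X 2 μ) (hY : MemLp Y 2 ν) :
    MemLp (fun p : Ω × Ω' => X p.1 * Y p.2) 2 (μ.prod ν) := by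
  refine (memLp_two_iff_integrable_sq (hX.1.comp_fst.mul hY.1.comp_snd)).2 ?_
  simpa only [Pi.mul_apply, mul_pow] using hX.integrable_sq.mul_prod hY.integrable_sq

variable {Ω : Type*} [MeasurableSpace Ω] {μ : Measure Ω} [IsProbabilityMeasure μ]

lemma abs_integral_le_of_abs_le {X : Ω → ℝ} {C : ℝ} (hX : ∀ ω, |X ω| ≤ C) :
    |∫ ω, X ω ∂μ| ≤ C := by
  simpa only [norm_eq_abs, probReal_univ, mul_one]
    using norm_integral_le_of_norm_le_const (μ := μ) (f := X) (ae_of_all _ hX)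

lemma integral_abs_le_sqrt_integral_sq {X : Ω → ℝ} (hX : MemLp X 2 μ) :
    ∫ ω, |X ω| ∂μ ≤ √(∫ ω, X ω ^ 2 ∂μ) := by
  refine le_sqrt_of_sq_le (sub_nonneg.1 ?_)
  simpa only [variance_eq_sub hX.abs, Pi.pow_apply, Pi.abs_apply, sq_abs]
    using variance_nonneg |X| μ

lemma covariance_mul_prod {X Y : Ω → ℝ} (hX : MemLp X 2 μ) (hY : MemLp Y 2 μ) :
    cov[fun p : Ω × Ω => X p.1 * X p.2, fun p => Y p.1 * Y p.2; μ.prod μ]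
      = (∫ ω, X ω * Y ω ∂μ) ^ 2 - ((∫ ω, X ω ∂μ) * ∫ ω, Y ω ∂μ) ^ 2 := by
  rw [covariance_eq_sub (memLp_mul_prod hX hX) (memLp_mul_prod hY hY)]
  simp only [Pi.mul_apply, mul_mul_mul_comm (X _) (X _), integral_prod_mul,
    integral_prod_mul (μ := μ) (ν := μ) (fun ω => X ω * Y ω) (fun ω => X ω * Y ω)]
  ring

lemma covariance_mul_prod_le {X Y : Ω → ℝ} (hX : AEStronglyMeasurable X μ)
    (hY : AEStronglyMeasurable Y μ) (hX_le : ∀ ω, |X ω| ≤ 1) (hY_le : ∀ ω, |Y ω| ≤ 1)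
    (hcov : 0 ≤ cov[X, Y; μ]) :
    cov[fun p : Ω × Ω => X p.1 * X p.2, fun p => Y p.1 * Y p.2; μ.prod μ] ≤ 2 * cov[X, Y; μ] := by
  have abs_mul_le_one {a b : ℝ} (ha : |a| ≤ 1) (hb : |b| ≤ 1) : |a * b| ≤ 1 := by
    simpa only [abs_mul] using mul_le_one₀ ha (abs_nonneg b) hb
  have hXY : ∫ ω, X ω * Y ω ∂μ ≤ 1 :=
    (abs_le.1 (abs_integral_le_of_abs_le fun ω => abs_mul_le_one (hX_le ω) (hY_le ω))).2
  have hmeans : (∫ ω, X ω ∂μ) * ∫ ω, Y ω ∂μ ≤ 1 :=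
    (abs_le.1 (abs_mul_le_one (abs_integral_le_of_abs_le hX_le)
      (abs_integral_le_of_abs_le hY_le))).2
  have hX₂ : MemLp X 2 μ := .of_bound hX 1 (ae_of_all _ hX_le)
  have hY₂ : MemLp Y 2 μ := .of_bound hY 1 (ae_of_all _ hY_le)
  rw [covariance_mul_prod hX₂ hY₂, sq_sub_sq, mul_comm]
  rw [covariance_eq_sub hX₂ hY₂] at hcov ⊢
  simp only [Pi.mul_apply] at hcov ⊢
  nlinarith

lemma variance_sum_mul_prod_le {ι : Type*} [Fintype ι] {X : ι → Ω → ℝ}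
    (hX : ∀ i, AEStronglyMeasurable (X i) μ) (hX_le : ∀ i ω, |X i ω| ≤ 1)
    (hcov : ∀ i j, 0 ≤ cov[X i, X j; μ]) :
    Var[fun p : Ω × Ω => ∑ i, X i p.1 * X i p.2; μ.prod μ] ≤ 2 * Var[fun ω => ∑ i, X i ω; μ] := by
  have hX₂ i : MemLp (X i) 2 μ := .of_bound (hX i) 1 (ae_of_all _ (hX_le i))
  rw [variance_fun_sum fun i => memLp_mul_prod (hX₂ i) (hX₂ i), variance_fun_sum hX₂]
  simp only [Finset.mul_sum]
  gcongr with i _ j _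
  exact covariance_mul_prod_le (hX i) (hX j) (hX_le i) (hX_le j) (hcov i j)

end Moments

section GibbsMeasure

variable {α : Type*} [MeasurableSpace α]

/-- The Gibbs measure with density proportional to `exp H` with respect to counting measure; `H`
is minus the Hamiltonian, with the inverse temperature absorbed. -/
noncomputable def gibbsMeasure (H : α → ℝ) : Measure α := Measure.count.tilted H

variable [MeasurableSingletonClass α]

lemma integral_gibbsMeasure [Fintype α] (H f : α → ℝ) :
    ∫ a, f a ∂gibbsMeasure H = (∑ a, f a * exp (H a)) / ∑ a, exp (H a) := by
  rw [gibbsMeasure, integral_tilted]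
  simp only [integral_fintype Integrable.of_finite, count_real_singleton, smul_eq_mul, one_mul,
    Finset.sum_div]
  exact Finset.sum_congr rfl fun a _ => by ring

variable [Finite α] [Nonempty α]

instance isProbabilityMeasure_gibbsMeasure (H : α → ℝ) :
    IsProbabilityMeasure (gibbsMeasure H) :=
  isProbabilityMeasure_tilted .of_finite

lemma covariance_gibbsMeasure_eq_sub (H f k : α → ℝ) :
    cov[f, k; gibbsMeasure H] = ∫ a, f a * k a ∂gibbsMeasure H
      - (∫ a, f a ∂gibbsMeasure H) * ∫ a, k a ∂gibbsMeasure H :=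
  covariance_eq_sub .of_discrete .of_discrete

lemma hasDerivAt_integral_gibbsMeasure {H : ℝ → α → ℝ} {k : α → ℝ} {t : ℝ} (f : α → ℝ)
    (hH : ∀ a, HasDerivAt (fun s => H s a) (k a) t) :
    HasDerivAt (fun s => ∫ a, f a ∂gibbsMeasure (H s)) cov[f, k; gibbsMeasure (H t)] t := by
  cases nonempty_fintype α
  have hnum : HasDerivAt (fun s => ∑ a, f a * exp (H s a)) (∑ a, f a * k a * exp (H t a)) t :=
    .fun_sum fun a _ => ((hH a).exp.const_mul (f a)).congr_deriv (by ring)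
  have hden : HasDerivAt (fun s => ∑ a, exp (H s a)) (∑ a, k a * exp (H t a)) t :=
    .fun_sum fun a _ => (hH a).exp.congr_deriv (mul_comm _ _)
  have hZ : ∑ a, exp (H t a) ≠ 0 := (Finset.sum_pos (fun a _ => exp_pos _) univ_nonempty).ne'
  simp only [covariance_gibbsMeasure_eq_sub, integral_gibbsMeasure]
  exact (hnum.fun_div hden hZ).congr_deriv (by field_simp)

lemma continuous_integral_gibbsMeasure {X : Type*} [TopologicalSpace X] {H : X → α → ℝ}
    (hH : ∀ a, Continuous fun x => H x a) (f : α → ℝ) :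
    Continuous fun x => ∫ a, f a ∂gibbsMeasure (H x) := by
  cases nonempty_fintype α
  have hZ x : ∑ a, exp (H x a) ≠ 0 := (Finset.sum_pos (fun a _ => exp_pos _) univ_nonempty).ne'
  simp only [integral_gibbsMeasure]
  fun_prop (disch := exact hZ _)

variable {X : Type*} [TopologicalSpace X] [MeasurableSpace X] [OpensMeasurableSpace X]
  {μ : Measure X} [IsFiniteMeasure μ] {H : X → α → ℝ}

lemma integrable_integral_gibbsMeasure (hH : ∀ a, Continuous fun x => H x a) (f : α → ℝ) :
    Integrable (fun x => ∫ a, f a ∂gibbsMeasure (H x)) μ := by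
  obtain ⟨C, hC⟩ := Finite.exists_le fun a => |f a|
  exact .of_bound (continuous_integral_gibbsMeasure hH f).aestronglyMeasurable C
    (ae_of_all _ fun x => abs_integral_le_of_abs_le hC)

lemma integrable_covariance_gibbsMeasure (hH : ∀ a, Continuous fun x => H x a) (f k : α → ℝ) :
    Integrable (fun x => cov[f, k; gibbsMeasure (H x)]) μ := by
  obtain ⟨C, hC⟩ := Finite.exists_le fun a => |f a|
  simp only [covariance_gibbsMeasure_eq_sub]
  exact (integrable_integral_gibbsMeasure hH _).sub <|
    (integrable_integral_gibbsMeasure hH k).bdd_mul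
      (continuous_integral_gibbsMeasure hH f).aestronglyMeasurable
      (ae_of_all _ fun x => abs_integral_le_of_abs_le hC)

lemma integrable_variance_gibbsMeasure (hH : ∀ a, Continuous fun x => H x a) (f : α → ℝ) :
    Integrable (fun x => Var[f; gibbsMeasure (H x)]) μ :=
  (integrable_covariance_gibbsMeasure hH f f).congr
    (ae_of_all _ fun _ => covariance_self .of_discrete)

end GibbsMeasure

section Supermodular

/-- A real function on a lattice is supermodular if it satisfies the lattice inequality of the
Fortuin–Kasteleyn–Ginibre theorem in logarithmic form. -/
def Supermodular {α : Type*} [Lattice α] (f : α → ℝ) : Prop :=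
  ∀ a b, f a + f b ≤ f (a ⊓ b) + f (a ⊔ b)

variable {α : Type*}

lemma Supermodular.const_mul [Lattice α] {f : α → ℝ} (hf : Supermodular f) {c : ℝ} (hc : 0 ≤ c) :
    Supermodular fun a => c * f a := fun a b => by
  simpa only [mul_add] using mul_le_mul_of_nonneg_left (hf a b) hc

lemma Supermodular.sum [Lattice α] {κ : Type*} {s : Finset κ} {f : κ → α → ℝ}
    (hf : ∀ i ∈ s, Supermodular (f i)) : Supermodular fun a => ∑ i ∈ s, f i a := fun a b => by
  simpa only [Finset.sum_add_distrib] using Finset.sum_le_sum fun i hi => hf i hi a b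

lemma supermodular_mul_apply {ι κ : Type*} [LinearOrder κ] {f k : κ → ℝ} (hf : Monotone f)
    (hk : Monotone k) (x y : ι) : Supermodular fun σ : ι → κ => f (σ x) * k (σ y) := by
  intro σ τ
  simp only [Pi.inf_apply, Pi.sup_apply]
  rcases le_total (σ x) (τ x) with hx | hx <;> rcases le_total (σ y) (τ y) with hy | hy <;>
    simp only [hx, hy, inf_of_le_left, inf_of_le_right, sup_of_le_left, sup_of_le_right] <;>
    nlinarith [mul_nonneg (sub_nonneg.2 (hf hx)) (sub_nonneg.2 (hk hy))]

lemma covariance_gibbsMeasure_nonneg [DistribLattice α] [Finite α] [Nonempty α]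
    [MeasurableSpace α] [MeasurableSingletonClass α] {H f k : α → ℝ}
    (hH : Supermodular H) (hf : Monotone f) (hk : Monotone k) :
    0 ≤ cov[f, k; gibbsMeasure H] := by
  cases nonempty_fintype α
  obtain ⟨c, hc⟩ := Finite.exists_ge f
  obtain ⟨d, hd⟩ := Finite.exists_ge k
  have hZ : 0 < ∑ a, exp (H a) := Finset.sum_pos (fun a _ => exp_pos _) univ_nonempty
  have hfkg := fkg (μ := fun a => exp (H a)) (f := fun a => f a - c) (g := fun a => k a - d)
    (fun a => (exp_pos _).le) (fun a => sub_nonneg.2 (hc a)) (fun a => sub_nonneg.2 (hd a))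
    (fun a b hab => sub_le_sub_right (hf hab) c) (fun a b hab => sub_le_sub_right (hk hab) d)
    (fun a b => by simpa only [← exp_add, exp_le_exp] using hH a b)
  rw [← covariance_sub_const_left .of_finite c, ← covariance_sub_const_right .of_finite d,
    covariance_gibbsMeasure_eq_sub, integral_gibbsMeasure, integral_gibbsMeasure,
    integral_gibbsMeasure, sub_nonneg, div_mul_div_comm, div_le_div_iff₀ (mul_pos hZ hZ) hZ]
  simp only [mul_comm (exp _)] at hfkg
  nlinarith

end Supermodular

section RandomField

variable {ι α : Type*}

/-- Minus the Hamiltonian of a system with observables `φ x` coupled, on top of the deterministic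
part `U`, to an external field `g` of strength `h`. -/
def fieldEnergy [Fintype ι] (U : α → ℝ) (φ : ι → α → ℝ) (h : ℝ) (g : ι → ℝ) (a : α) : ℝ :=
  U a + h * ∑ x, g x * φ x a

/-- The law of an independent family of standard Gaussian variables indexed by `ι`. -/
noncomputable abbrev iidGaussian (ι : Type*) [Fintype ι] : Measure (ι → ℝ) :=
  .pi fun _ => gaussianReal 0 1

/-- The overlap of two replicas, for the observables `φ`. -/
noncomputable def replicaOverlap [Fintype ι] (φ : ι → α → ℝ) (p : α × α) : ℝ :=
  (Fintype.card ι : ℝ)⁻¹ * ∑ x, φ x p.1 * φ x p.2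

variable [Fintype ι]

lemma variance_replicaOverlap_le [MeasurableSpace α] {μ : Measure α} [IsProbabilityMeasure μ]
    {φ : ι → α → ℝ} (hφ : ∀ x, AEStronglyMeasurable (φ x) μ) (hφ_le : ∀ x a, |φ x a| ≤ 1)
    (hcov : ∀ x y, 0 ≤ cov[φ x, φ y; μ]) :
    Var[replicaOverlap φ; μ.prod μ]
      ≤ 2 * (Fintype.card ι : ℝ)⁻¹ ^ 2 * Var[fun a => ∑ x, φ x a; μ] := by
  unfold replicaOverlap
  rw [variance_const_mul, mul_comm 2, mul_assoc]
  gcongr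
  exact variance_sum_mul_prod_le hφ hφ_le hcov

lemma memLp_eval_iidGaussian (x : ι) : MemLp (fun g => g x) 2 (iidGaussian ι) :=
  (memLp_id_gaussianReal 2).comp_measurePreserving (measurePreserving_eval _ x)

lemma integral_sq_sum_iidGaussian :
    ∫ g : ι → ℝ, (∑ x, g x) ^ 2 ∂iidGaussian ι = Fintype.card ι := by
  have hmean : ∫ g : ι → ℝ, ∑ x, g x ∂iidGaussian ι = 0 := by
    rw [integral_finsetSum _ fun x _ => (memLp_eval_iidGaussian x).integrable one_le_two]
    exact Finset.sum_eq_zero fun x _ => by rw [integral_eval, integral_id_gaussianReal]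
  rw [← variance_of_integral_eq_zero (by fun_prop) hmean]
  simpa [← Finset.sum_fn] using
    variance_sum_pi fun _ : ι => memLp_id_gaussianReal (μ := 0) (v := 1) 2

lemma supermodular_fieldEnergy [Lattice α] {U : α → ℝ} {φ : ι → α → ℝ} (hU : Supermodular U)
    (hφ : ∀ x a b, φ x a + φ x b = φ x (a ⊓ b) + φ x (a ⊔ b)) (h : ℝ) (g : ι → ℝ) :
    Supermodular (fieldEnergy U φ h g) := by
  intro a b
  have hfield : h * ∑ x, g x * φ x a + h * ∑ x, g x * φ x b
      = h * ∑ x, g x * φ x (a ⊓ b) + h * ∑ x, g x * φ x (a ⊔ b) := by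
    simp only [← mul_add, ← Finset.sum_add_distrib, fun x => hφ x a b]
  simp only [fieldEnergy]
  linarith [hU a b]

lemma continuous_fieldEnergy (U : α → ℝ) (φ : ι → α → ℝ) (h : ℝ) (a : α) :
    Continuous fun g => fieldEnergy U φ h g a := by
  unfold fieldEnergy
  fun_prop

lemma hasDerivAt_fieldEnergy_update [DecidableEq ι] (U : α → ℝ) (φ : ι → α → ℝ) (h : ℝ)
    (g : ι → ℝ) (y : ι) (t : ℝ) (a : α) :
    HasDerivAt (fun s => fieldEnergy U φ h (Function.update g y s) a) (h * φ y a) t := by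
  have hcoord x := hasDerivAt_pi.1 (hasDerivAt_update g y t) x
  have hfield := HasDerivAt.fun_sum (u := univ) fun x _ => (hcoord x).mul_const (φ x a)
  exact ((hfield.const_mul h).const_add (U a)).congr_deriv (by simp [Pi.single_apply])

variable [MeasurableSpace α] [MeasurableSingletonClass α] [Finite α] [Nonempty α]
  (U : α → ℝ) (φ : ι → α → ℝ) (h : ℝ)

lemma integrable_eval_mul_integral_gibbsMeasure (f : α → ℝ) (y : ι) :
    Integrable (fun g => g y * ∫ a, f a ∂gibbsMeasure (fieldEnergy U φ h g)) (iidGaussian ι) := by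
  obtain ⟨C, hC⟩ := Finite.exists_le fun a => |f a|
  exact ((memLp_eval_iidGaussian y).integrable one_le_two).mul_bdd
    (continuous_integral_gibbsMeasure (continuous_fieldEnergy U φ h) f).aestronglyMeasurable
    (ae_of_all _ fun g => abs_integral_le_of_abs_le hC)

lemma mul_integral_covariance_eq_integral_eval_mul (f : α → ℝ) (y : ι) :
    h * ∫ g, cov[f, φ y; gibbsMeasure (fieldEnergy U φ h g)] ∂iidGaussian ι
      = ∫ g, g y * ∫ a, f a ∂gibbsMeasure (fieldEnergy U φ h g) ∂iidGaussian ι := by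
  classical
  have hcont := continuous_fieldEnergy U φ h
  have hparts := integral_coord_sub_mean_mul_pi_gaussianReal (m := fun _ : ι => 0)
    (v := fun _ => 1) (F := fun g => ∫ a, f a ∂gibbsMeasure (fieldEnergy U φ h g))
    (F' := fun g => h * cov[f, φ y; gibbsMeasure (fieldEnergy U φ h g)]) y
    (fun g => by
      simpa only [covariance_const_mul_right, Function.update_eq_self] using
        hasDerivAt_integral_gibbsMeasure f (hasDerivAt_fieldEnergy_update U φ h g y (g y)))
    (integrable_integral_gibbsMeasure hcont f)
    ((integrable_covariance_gibbsMeasure hcont f (φ y)).const_mul h)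
    (by simpa only [sub_zero] using integrable_eval_mul_integral_gibbsMeasure U φ h f y)
  simpa only [sub_zero, NNReal.coe_one, one_mul, integral_const_mul] using hparts.symm

lemma mul_integral_variance_sum_eq :
    h * ∫ g, Var[fun a => ∑ x, φ x a; gibbsMeasure (fieldEnergy U φ h g)] ∂iidGaussian ι
      = ∫ g, (∑ x, g x) * ∫ a, ∑ x, φ x a ∂gibbsMeasure (fieldEnergy U φ h g)
          ∂iidGaussian ι := by
  have hvar g : Var[fun a => ∑ x, φ x a; gibbsMeasure (fieldEnergy U φ h g)]
      = ∑ y, cov[fun a => ∑ x, φ x a, φ y; gibbsMeasure (fieldEnergy U φ h g)] := by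
    rw [← covariance_self .of_discrete,
      covariance_fun_sum_right (fun _ => .of_discrete) .of_discrete]
  simp only [hvar, Finset.sum_mul]
  rw [integral_finsetSum _ fun y _ =>
      integrable_covariance_gibbsMeasure (continuous_fieldEnergy U φ h) _ (φ y),
    integral_finsetSum _ fun y _ => integrable_eval_mul_integral_gibbsMeasure U φ h _ y,
    Finset.mul_sum]
  exact Finset.sum_congr rfl fun y _ => mul_integral_covariance_eq_integral_eval_mul U φ h _ y

variable {φ} in
lemma abs_mul_integral_variance_sum_le (hφ : ∀ x a, |φ x a| ≤ 1) :
    |h| * ∫ g, Var[fun a => ∑ x, φ x a; gibbsMeasure (fieldEnergy U φ h g)] ∂iidGaussian ι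
      ≤ Fintype.card ι * √(Fintype.card ι) := by
  have hmagnetization a : |∑ x, φ x a| ≤ Fintype.card ι :=
    (Finset.abs_sum_le_sum_abs _ _).trans <| by
      simpa using Finset.sum_le_card_nsmul univ _ 1 fun x _ => hφ x a
  have hsum : MemLp (fun g : ι → ℝ => ∑ x, g x) 2 (iidGaussian ι) :=
    memLp_finsetSum _ fun x _ => memLp_eval_iidGaussian x
  calc |h| * ∫ g, Var[fun a => ∑ x, φ x a; gibbsMeasure (fieldEnergy U φ h g)] ∂iidGaussian ι
      = |∫ g, (∑ x, g x) * ∫ a, ∑ x, φ x a ∂gibbsMeasure (fieldEnergy U φ h g)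
          ∂iidGaussian ι| := by
        rw [← mul_integral_variance_sum_eq, abs_mul,
          abs_of_nonneg (integral_nonneg fun g => variance_nonneg _ _)]
    _ ≤ ∫ g : ι → ℝ, |∑ x, g x| * Fintype.card ι ∂iidGaussian ι := by
        refine abs_integral_le_integral_abs.trans <| integral_mono_of_nonneg
          (ae_of_all _ fun g => abs_nonneg _)
          ((hsum.integrable one_le_two).abs.mul_const _) (ae_of_all _ fun g => ?_)
        simp only [abs_mul]
        gcongr
        exact abs_integral_le_of_abs_le hmagnetization
    _ ≤ Fintype.card ι * √(Fintype.card ι) := by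
        rw [integral_mul_const, mul_comm, ← integral_sq_sum_iidGaussian]
        gcongr
        exact integral_abs_le_sqrt_integral_sq hsum

end RandomField

section IsingModel

lemma monotone_spin : Monotone spin
  | false, false, _ | true, true, _ => le_rfl
  | false, true, _ => by norm_num [spin]

lemma abs_spin (b : Bool) : |spin b| = 1 := by
  cases b <;> simp [spin]

variable (d n : ℕ) (β h : ℝ)

/-- The ferromagnetic part `β ∑_{⟨xy⟩} σ_x σ_y` of `energy`. -/
noncomputable def nearestNeighborEnergy (σ : Config d n) : ℝ :=
  β * ((1 : ℝ) / 2 * ∑ x : {x // x ∈ box d n}, ∑ y : {x // x ∈ box d n},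
      if (∑ i, |x.1 i - y.1 i|) = 1 then spin (σ x) * spin (σ y) else 0)

lemma energy_eq_fieldEnergy (g : {x // x ∈ box d n} → ℝ) :
    energy d n β h g
      = fieldEnergy (nearestNeighborEnergy d n β) (fun x σ => spin (σ x)) h g := rfl

lemma supermodular_nearestNeighborEnergy {β : ℝ} (hβ : 0 ≤ β) :
    Supermodular (nearestNeighborEnergy d n β) := by
  refine .const_mul (.const_mul (.sum fun x _ => .sum fun y _ => ?_) one_half_pos.le) hβ
  split_ifs
  · exact supermodular_mul_apply monotone_spin monotone_spin x y
  · exact fun _ _ => le_rfl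

lemma overlap_eq_replicaOverlap (p : Config d n × Config d n) :
    overlap d n p.1 p.2 = replicaOverlap (fun x σ => spin (σ x)) p := by
  rw [overlap, replicaOverlap, Fintype.card_coe]

lemma gibbs2_eq_integral (g : {x // x ∈ box d n} → ℝ) (f : Config d n → Config d n → ℝ) :
    gibbs2 d n β h g f = ∫ p, f p.1 p.2
      ∂(gibbsMeasure (energy d n β h g)).prod (gibbsMeasure (energy d n β h g)) := by
  have hgibbs (k : Config d n → ℝ) : ∫ σ, k σ ∂gibbsMeasure (energy d n β h g)
      = (∑ σ, k σ * exp (energy d n β h g σ)) / Z d n β h g := integral_gibbsMeasure _ k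
  rw [integral_prod _ .of_finite]
  simp only [hgibbs, gibbs2, Finset.sum_div, Finset.sum_mul]
  exact Finset.sum_congr rfl fun σ _ => Finset.sum_congr rfl fun τ _ => by ring

lemma gibbs2_sq_sub_sq_eq_variance (g : {x // x ∈ box d n} → ℝ)
    (f : Config d n → Config d n → ℝ) :
    gibbs2 d n β h g (fun σ τ => f σ τ ^ 2) - gibbs2 d n β h g f ^ 2 = Var[fun p => f p.1 p.2;
      (gibbsMeasure (energy d n β h g)).prod (gibbsMeasure (energy d n β h g))] := by
  simp only [gibbs2_eq_integral]
  exact (variance_eq_sub .of_discrete).symm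

end IsingModel

end RandomFieldIsing

open RandomFieldIsing

theorem overlap_gibbs_fluctuation_general {ι α : Type*} [Fintype ι] [DistribLattice α] [Finite α]
    [Nonempty α] [MeasurableSpace α] [MeasurableSingletonClass α] {U : α → ℝ} {φ : ι → α → ℝ}
    {h : ℝ} (hU : Supermodular U) (hφ_mono : ∀ x, Monotone (φ x))
    (hφ_modular : ∀ x a b, φ x a + φ x b = φ x (a ⊓ b) + φ x (a ⊔ b))
    (hφ_le : ∀ x a, |φ x a| ≤ 1) (hh : h ≠ 0) :
    ∫ g, Var[replicaOverlap φ; (gibbsMeasure (fieldEnergy U φ h g)).prod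
        (gibbsMeasure (fieldEnergy U φ h g))] ∂iidGaussian ι
      ≤ 2 / (|h| * √(Fintype.card ι)) := by
  set N := (Fintype.card ι : ℝ)
  have hfkg g x y : 0 ≤ cov[φ x, φ y; gibbsMeasure (fieldEnergy U φ h g)] :=
    covariance_gibbsMeasure_nonneg (supermodular_fieldEnergy hU hφ_modular h g)
      (hφ_mono x) (hφ_mono y)
  calc _ ≤ ∫ g, 2 * N⁻¹ ^ 2 * Var[fun a => ∑ x, φ x a; gibbsMeasure (fieldEnergy U φ h g)]
          ∂iidGaussian ι :=
        integral_mono_of_nonneg (ae_of_all _ fun g => variance_nonneg _ _)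
          ((integrable_variance_gibbsMeasure (continuous_fieldEnergy U φ h) _).const_mul _)
          (ae_of_all _ fun g => variance_replicaOverlap_le (fun _ => .of_discrete) hφ_le (hfkg g))
    _ ≤ 2 * N⁻¹ ^ 2 * (N * √N / |h|) := by
        rw [integral_const_mul]
        gcongr
        rw [le_div_iff₀' (abs_pos.2 hh)]
        exact abs_mul_integral_variance_sum_le U h hφ_le
    _ = 2 / (|h| * √N) := by
        rcases eq_or_ne N 0 with hN | hN
        · simp [hN]
        · field_simp
          exact div_sqrt.symm

/-- The main lemma: the expected Gibbs fluctuation of the overlap of two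
independent replicas satisfies
`E(⟨R₁₂²⟩ − ⟨R₁₂⟩²) ≤ 2√(2 + h²) / (h √|V_n|)`. -/
theorem overlap_gibbs_fluctuation (d n : ℕ) (β h : ℝ) (hβ : 0 < β) (hh : 0 < h) :
    ∫ g, (gibbs2 d n β h g (fun σ1 σ2 => (overlap d n σ1 σ2) ^ 2)
        - (gibbs2 d n β h g (overlap d n)) ^ 2) ∂(μdis d n)
      ≤ 2 * Real.sqrt (2 + h ^ 2) / (h * Real.sqrt ((box d n).card : ℝ)) := by
  simp only [gibbs2_sq_sub_sq_eq_variance, overlap_eq_replicaOverlap, energy_eq_fieldEnergy]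
  calc _ ≤ 2 / (|h| * √(Fintype.card {x // x ∈ box d n})) :=
        overlap_gibbs_fluctuation_general (supermodular_nearestNeighborEnergy d n hβ.le)
          (fun x _ _ hστ => monotone_spin (hστ x)) (fun x _ _ => (fn_min_add_fn_max spin _ _).symm)
          (fun x σ => (abs_spin _).le) hh.ne'
    _ ≤ 2 * √(2 + h ^ 2) / (h * √(box d n).card) := by
        rw [abs_of_pos hh, Fintype.card_coe]
        gcongr
        exact le_mul_of_one_le_right zero_le_two (one_le_sqrt.2 (by nlinarith))
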